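/- arXiv:1607.03096 — 3 statements merged into one kernel-verified Lean document; each statement's English description precedes it below -/
import Mathlib

section
/- Let μ be a Borel probability measure on ℝ and let R ∈ (0, ∞]. Assume that for every u with |u| < R the function x ↦ e^{ux} is integrable with respect to μ (i.e. the moment generating function M(u) = ∫ e^{ux} dμ(x) is finite for |u| < R). Then for every A > 0 and every s with 0 < s < R: μ({x : |x| > A}) ≤ ( ∫_0^s ( (M(u) + M(−u))/2 − 1 ) du ) / ( s · ( sinh(As)/(As) − 1 ) ). -/
/-!
For fixed `u`, the function `x ↦ cosh (u x) - 1` is nonnegative, and at least `cosh (u A) - 1` where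
`|x| > A`, so Markov's inequality gives
`(cosh (u A) - 1) μ(|x| > A) ≤ ∫ (cosh (u x) - 1) dμ = (M u + M (-u)) / 2 - 1`.
Integrating this over `u ∈ [0, s]` yields the estimate, because
`∫₀ˢ (cosh (u A) - 1) du = s (sinh (A s) / (A s) - 1) > 0`. No interchange of integrals is needed;
the right-hand side is integrable in `u` because the moment generating function is continuous on the
interior of its domain.
-/

open MeasureTheory Real ENNReal

/-- Markov's inequality for `x ↦ cosh (u x) - 1` on the event `A < |x|`. -/
lemma cosh_sub_one_mul_tail_le (μ : Measure ℝ) [IsProbabilityMeasure μ] (u A : ℝ) (hA : 0 < A)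
    (h1 : Integrable (fun x : ℝ => Real.exp (u * x)) μ)
    (h2 : Integrable (fun x : ℝ => Real.exp (-u * x)) μ) :
    (Real.cosh (u * A) - 1) * μ.real {x : ℝ | A < |x|} ≤
      ((∫ x, Real.exp (u * x) ∂μ) + ∫ x, Real.exp (-u * x) ∂μ) / 2 - 1 := by
  have hcosh : ∀ x : ℝ, Real.cosh (u * x) - 1 =
      (Real.exp (u * x) + Real.exp (-u * x)) / 2 - 1 := fun x => by
    rw [Real.cosh_eq, neg_mul]
  have hsum : Integrable (fun x : ℝ => (Real.exp (u * x) + Real.exp (-u * x)) / 2) μ :=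
    (h1.add h2).div_const 2
  have hI : Integrable (fun x : ℝ => Real.cosh (u * x) - 1) μ := by
    simp_rw [hcosh]
    exact hsum.sub (integrable_const 1)
  have heq : ∫ x, (Real.cosh (u * x) - 1) ∂μ =
      ((∫ x, Real.exp (u * x) ∂μ) + ∫ x, Real.exp (-u * x) ∂μ) / 2 - 1 := by
    simp_rw [hcosh]
    rw [integral_sub hsum (integrable_const 1), integral_div, integral_add h1 h2]
    simp
  rw [← heq]
  have hnn : ∀ x : ℝ, 0 ≤ Real.cosh (u * x) - 1 := fun x => sub_nonneg.2 (Real.one_le_cosh _)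
  refine le_trans ?_ (mul_meas_ge_le_integral_of_nonneg (Filter.Eventually.of_forall hnn) hI
    (Real.cosh (u * A) - 1))
  refine mul_le_mul_of_nonneg_left (measureReal_mono fun x hx => ?_) (hnn A)
  refine sub_le_sub_right (Real.cosh_le_cosh.2 ?_) 1
  rw [abs_mul, abs_mul, abs_of_pos hA]
  exact mul_le_mul_of_nonneg_left (le_of_lt hx) (abs_nonneg u)

lemma integral_cosh_mul_sub_one (A s : ℝ) (hA : 0 < A) (hs : 0 < s) :
    ∫ u in (0 : ℝ)..s, (Real.cosh (u * A) - 1) = s * (Real.sinh (A * s) / (A * s) - 1) := by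
  have hderiv : ∀ u ∈ Set.uIcc 0 s,
      HasDerivAt (fun u => Real.sinh (u * A) / A - u) (Real.cosh (u * A) - 1) u := fun u _ => by
    have h := ((((hasDerivAt_id u).mul_const A).sinh).div_const A).sub (hasDerivAt_id u)
    convert! h using 1
    simp [hA.ne']
  have hcont : Continuous fun u : ℝ => Real.cosh (u * A) - 1 := by fun_prop
  rw [intervalIntegral.integral_eq_sub_of_hasDerivAt hderiv (hcont.intervalIntegrable _ _)]
  simp only [zero_mul, Real.sinh_zero, zero_div, sub_zero]
  rw [mul_comm s A]
  field_simp

/-- Theorem 2 of the paper: exponential two-sided tail estimate via the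
moment generating function, finite on `(-R, R)` with `R ∈ (0, ∞]`. -/
theorem tail_estimate_exponential
    (μ : Measure ℝ) [IsProbabilityMeasure μ]
    (R : ℝ≥0∞) (hR : 0 < R)
    (hint : ∀ u : ℝ, ENNReal.ofReal |u| < R → Integrable (fun x : ℝ => Real.exp (u * x)) μ)
    (M : ℝ → ℝ) (hM : ∀ u : ℝ, M u = ∫ x, Real.exp (u * x) ∂μ)
    (A : ℝ) (hA : 0 < A) (s : ℝ) (hs : 0 < s) (hsR : ENNReal.ofReal s < R) :
    (μ {x : ℝ | A < |x|}).toReal ≤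
      (∫ u in (0 : ℝ)..s, ((M u + M (-u)) / 2 - 1)) /
        (s * (Real.sinh (A * s) / (A * s) - 1)) := by
  have hAs : 0 < A * s := mul_pos hA hs
  have hden : 0 < s * (Real.sinh (A * s) / (A * s) - 1) :=
    mul_pos hs (sub_pos.2 ((one_lt_div hAs).2 (Real.self_lt_sinh_iff.2 hAs)))
  have hlt : ∀ u ∈ Set.Icc 0 s, ENNReal.ofReal |u| < R := fun u hu =>
    (ENNReal.ofReal_le_ofReal (by rw [abs_of_nonneg hu.1]; exact hu.2)).trans_lt hsR
  have hopen : IsOpen {u : ℝ | ENNReal.ofReal |u| < R} :=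
    isOpen_lt (ENNReal.continuous_ofReal.comp continuous_abs) continuous_const
  have hMc : ContinuousOn M {u : ℝ | ENNReal.ofReal |u| < R} := by
    have hMmgf : M = ProbabilityTheory.mgf id μ := funext hM
    rw [hMmgf]
    exact ProbabilityTheory.continuousOn_mgf.mono (interior_maximal hint hopen)
  have hMi : IntervalIntegrable (fun u => (M u + M (-u)) / 2 - 1) volume 0 s := by
    apply ContinuousOn.intervalIntegrable
    rw [Set.uIcc_of_le hs.le]
    have hneg : ContinuousOn (fun u => M (-u)) (Set.Icc 0 s) :=
      hMc.comp continuousOn_neg fun u hu => by simpa using hlt u hu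
    exact (((hMc.mono hlt).add hneg).div_const 2).sub continuousOn_const
  have hcont : Continuous fun u : ℝ => (Real.cosh (u * A) - 1) * μ.real {x : ℝ | A < |x|} := by
    fun_prop
  rw [le_div_iff₀ hden, ← integral_cosh_mul_sub_one A s hA hs, mul_comm,
    ← intervalIntegral.integral_mul_const]
  refine intervalIntegral.integral_mono_on hs.le (hcont.intervalIntegrable _ _) hMi fun u hu => ?_
  rw [hM, hM]
  exact cosh_sub_one_mul_tail_le μ u A hA (hint u (hlt u hu))
    (hint (-u) (by simpa using hlt u hu))
end

section
/- Let μ be a Borel probability measure on ℝ and let b ∈ (0, ∞]. Assume that for every u with 0 < u < b the function x ↦ e^{ux} is integrable with respect to μ, and write M(u) = ∫ e^{ux} dμ(x). Then for every A > 0 and every s with 0 < s < b: μ({x : x > A}) ≤ ( A / (e^{sA} − sA − 1) ) · ∫_0^s ( M(u) + μ((−∞, 0]) − 1 ) du. -/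
open MeasureTheory Real ENNReal

/-!
For `u ≥ 0` one has pointwise `(e^{uA} - 1) 1_{x > A} ≤ e^{ux} + 1_{x ≤ 0} - 1`: both sides are
compared separately on `x ≤ 0`, `0 < x ≤ A` and `A < x`. Integrating in `x` against `μ` gives
`(e^{uA} - 1) μ(A, ∞) ≤ M(u) + μ(-∞, 0] - 1`, and integrating in `u` over `[0, s]` gives the
result, since `∫₀ˢ (e^{uA} - 1) du = (e^{sA} - sA - 1) / A > 0`.
The function `M` is integrable on `[0, s]` because it is continuous there, by dominated convergence
with the bound `e^{ux} ≤ 1 + e^{sx}`.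
-/

theorem exp_mul_le_one_add {u s : ℝ} (h0 : 0 ≤ u) (hus : u ≤ s) (x : ℝ) :
    Real.exp (u * x) ≤ 1 + Real.exp (s * x) := by
  rcases le_total x 0 with hx | hx
  · have h : Real.exp (u * x) ≤ 1 := Real.exp_le_one_iff.2 (mul_nonpos_of_nonneg_of_nonpos h0 hx)
    linarith [Real.exp_pos (s * x)]
  · have h : Real.exp (u * x) ≤ Real.exp (s * x) :=
      Real.exp_le_exp.2 (mul_le_mul_of_nonneg_right hus hx)
    linarith

theorem tail_le_mgf (μ : Measure ℝ) [IsProbabilityMeasure μ] {u A : ℝ} (hu : 0 ≤ u) (hA : 0 < A)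
    (hint : Integrable (fun x : ℝ => Real.exp (u * x)) μ) :
    μ.real (Set.Ioi A) * (Real.exp (u * A) - 1) ≤
      (∫ x, Real.exp (u * x) ∂μ) + μ.real (Set.Iic 0) - 1 := by
  have i1 : Integrable ((Set.Iic (0 : ℝ)).indicator (fun _ => (1 : ℝ))) μ :=
    (integrable_const _).indicator measurableSet_Iic
  have i2 : Integrable ((Set.Ioi A).indicator (fun _ => Real.exp (u * A) - 1)) μ :=
    (integrable_const _).indicator measurableSet_Ioi
  have e1 : ∫ x, (Set.Iic (0 : ℝ)).indicator (fun _ => (1 : ℝ)) x ∂μ = μ.real (Set.Iic 0) := by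
    rw [integral_indicator_const _ measurableSet_Iic]; simp
  have e2 : ∫ x, (Set.Ioi A).indicator (fun _ => Real.exp (u * A) - 1) x ∂μ =
      μ.real (Set.Ioi A) * (Real.exp (u * A) - 1) := by
    rw [integral_indicator_const _ measurableSet_Ioi]; simp
  have e3 : ∫ x, (Real.exp (u * x) + (Set.Iic (0 : ℝ)).indicator (fun _ => (1 : ℝ)) x - 1) ∂μ =
      (∫ x, Real.exp (u * x) ∂μ) + μ.real (Set.Iic 0) - 1 := by
    rw [integral_sub (by exact hint.add i1) (integrable_const _), integral_add hint i1, e1]; simp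
  rw [← e2, ← e3]
  refine integral_mono i2 ((hint.add i1).sub (integrable_const _)) fun x => ?_
  simp only [Set.indicator_apply, Set.mem_Ioi, Set.mem_Iic]
  rcases le_or_gt x 0 with hx | hx
  · rw [if_neg (by linarith), if_pos hx]
    linarith [Real.exp_pos (u * x)]
  · rw [if_neg (not_le.2 hx)]
    split_ifs with h
    · linarith [Real.exp_le_exp.2 (mul_le_mul_of_nonneg_left h.le hu)]
    · linarith [Real.one_le_exp (mul_nonneg hu hx.le)]

/-- Theorem 3 of the paper, first inequality: one-sided estimate for the right tail. -/
theorem right_tail_estimate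
    (μ : Measure ℝ) [IsProbabilityMeasure μ]
    (b : ℝ≥0∞) (hb : 0 < b)
    (hint : ∀ u : ℝ, 0 < u → ENNReal.ofReal u < b →
      Integrable (fun x : ℝ => Real.exp (u * x)) μ)
    (M : ℝ → ℝ) (hM : ∀ u : ℝ, M u = ∫ x, Real.exp (u * x) ∂μ)
    (A : ℝ) (hA : 0 < A) (s : ℝ) (hs : 0 < s) (hsb : ENNReal.ofReal s < b) :
    (μ {x : ℝ | A < x}).toReal ≤
      A / (Real.exp (s * A) - s * A - 1) *
        ∫ u in (0 : ℝ)..s, (M u + (μ (Set.Iic (0 : ℝ))).toReal - 1) := by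
  have hpos : 0 < Real.exp (s * A) - s * A - 1 := by
    linarith [Real.add_one_lt_exp (mul_pos hs hA).ne']
  have hints := hint s hs hsb
  have hI : ∀ u ∈ Set.Icc (0 : ℝ) s, Integrable (fun x : ℝ => Real.exp (u * x)) μ := by
    intro u hu
    refine ((integrable_const (1 : ℝ)).add hints).mono' (by fun_prop) (.of_forall fun x => ?_)
    rw [Real.norm_of_nonneg (Real.exp_pos _).le]
    exact exp_mul_le_one_add hu.1 hu.2 x
  have hMc : ContinuousOn M (Set.Icc 0 s) := by
    rw [funext hM]
    refine continuousOn_of_dominated (bound := fun x => 1 + Real.exp (s * x)) ?_ ?_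
      ((integrable_const (1 : ℝ)).add hints) (.of_forall fun x => by fun_prop)
    · exact fun u _ => by fun_prop
    · refine fun u hu => .of_forall fun x => ?_
      rw [Real.norm_of_nonneg (Real.exp_pos _).le]
      exact exp_mul_le_one_add hu.1 hu.2 x
  have hMi : IntervalIntegrable (fun u => M u + (μ (Set.Iic (0 : ℝ))).toReal - 1) volume 0 s := by
    apply ContinuousOn.intervalIntegrable
    rw [Set.uIcc_of_le hs.le]
    fun_prop
  have hmono : ∫ u in (0 : ℝ)..s, (μ (Set.Ioi A)).toReal * (Real.exp (u * A) - 1) ≤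
      ∫ u in (0 : ℝ)..s, (M u + (μ (Set.Iic (0 : ℝ))).toReal - 1) := by
    refine intervalIntegral.integral_mono_on hs.le
      (Continuous.intervalIntegrable (by fun_prop) _ _) hMi fun u hu => ?_
    rw [hM u]
    exact tail_le_mgf μ hu.1 hA (hI u hu)
  have hcalc : ∫ u in (0 : ℝ)..s, (Real.exp (u * A) - 1) =
      (Real.exp (s * A) - s * A - 1) / A := by
    rw [intervalIntegral.integral_sub (Continuous.intervalIntegrable (by fun_prop) _ _)
      (Continuous.intervalIntegrable (by fun_prop) _ _),
      intervalIntegral.integral_comp_mul_right (fun y => Real.exp y) hA.ne', integral_exp]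
    simp
    field_simp
    ring
  rw [intervalIntegral.integral_const_mul, hcalc] at hmono
  change (μ (Set.Ioi A)).toReal ≤ _
  calc (μ (Set.Ioi A)).toReal
      = A / (Real.exp (s * A) - s * A - 1) *
        ((μ (Set.Ioi A)).toReal * ((Real.exp (s * A) - s * A - 1) / A)) := by
        rw [mul_left_comm, div_mul_div_cancel₀ hpos.ne', div_self hA.ne', mul_one]
    _ ≤ _ := mul_le_mul_of_nonneg_left hmono (div_nonneg hA.le hpos.le)
end

section
/- Let μ be a Borel probability measure on ℝ and let b ∈ (0, ∞]. Assume that for every u with 0 < u < b the function x ↦ e^{−ux} is integrable with respect to μ, and write M(−u) = ∫ e^{−ux} dμ(x). Then for every A > 0 and every s with 0 < s < b: μ({x : x < −A}) ≤ ( A / (e^{sA} − sA − 1) ) · ∫_0^s ( M(−u) − μ((−∞, 0)) ) du. -/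
/-!
For `0 ≤ u ≤ s` the pointwise bound
`1_{x < 0} + (e^{uA} - 1) 1_{x < -A} ≤ e^{-ux}`
integrates against `μ` to `(e^{uA} - 1) μ(x < -A) ≤ M(-u) - μ(x < 0)`. Integrating this over
`u ∈ [0, s]` and using `∫₀ˢ (e^{uA} - 1) du = (e^{sA} - sA - 1) / A` gives the claim.
The function `u ↦ M(-u)` is integrable on `[0, s]` because `e^{-ux} ≤ 1 + e^{-sx}` there.
-/

open MeasureTheory Real ENNReal

lemma exp_neg_mul_le_one_add {u s : ℝ} (hu : 0 ≤ u) (hus : u ≤ s) (x : ℝ) :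
    Real.exp (-u * x) ≤ 1 + Real.exp (-s * x) := by
  rcases le_total 0 x with hx | hx
  · have h1 : Real.exp (-u * x) ≤ 1 := Real.exp_le_one_iff.2 (by nlinarith)
    linarith [Real.exp_pos (-s * x)]
  · have h1 : Real.exp (-u * x) ≤ Real.exp (-s * x) := Real.exp_le_exp.2 (by nlinarith)
    linarith

lemma integrable_exp_neg_mul_of_le {μ : Measure ℝ} [IsProbabilityMeasure μ] {u s : ℝ}
    (hI : Integrable (fun x : ℝ => Real.exp (-s * x)) μ) (hu : 0 ≤ u) (hus : u ≤ s) :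
    Integrable (fun x : ℝ => Real.exp (-u * x)) μ := by
  refine ((integrable_const (1 : ℝ)).add hI).mono' (by fun_prop) (ae_of_all _ fun x => ?_)
  rw [Real.norm_of_nonneg (Real.exp_pos _).le]
  exact exp_neg_mul_le_one_add hu hus x

lemma intervalIntegrable_laplace {μ : Measure ℝ} [IsProbabilityMeasure μ] {s : ℝ} (hs : 0 < s)
    (hI : Integrable (fun x : ℝ => Real.exp (-s * x)) μ) :
    IntervalIntegrable (fun u : ℝ => ∫ x, Real.exp (-u * x) ∂μ) volume 0 s := by
  have hm : StronglyMeasurable (fun u : ℝ => ∫ x, Real.exp (-u * x) ∂μ) := by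
    apply StronglyMeasurable.integral_prod_right (f := fun u x : ℝ => Real.exp (-u * x))
    exact Continuous.stronglyMeasurable (by fun_prop)
  refine (intervalIntegrable_const (c := ∫ x, (1 + Real.exp (-s * x)) ∂μ)).mono_fun'
    hm.aestronglyMeasurable ?_
  refine (ae_restrict_iff' measurableSet_uIoc).2 (ae_of_all _ fun u hu => ?_)
  rw [Set.uIoc_of_le hs.le] at hu
  beta_reduce
  rw [Real.norm_of_nonneg (integral_nonneg fun x => (Real.exp_pos _).le)]
  exact integral_mono (integrable_exp_neg_mul_of_le hI hu.1.le hu.2)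
    ((integrable_const (1 : ℝ)).add hI) (exp_neg_mul_le_one_add hu.1.le hu.2)

/-- The left-tail bound at a fixed parameter `u`, before integration over `u`. -/
lemma exp_sub_one_mul_tail_le {μ : Measure ℝ} [IsProbabilityMeasure μ] {u A : ℝ}
    (hI : Integrable (fun x : ℝ => Real.exp (-u * x)) μ) (hu : 0 ≤ u) (hA : 0 < A) :
    (Real.exp (u * A) - 1) * μ.real (Set.Iio (-A)) ≤
      (∫ x, Real.exp (-u * x) ∂μ) - μ.real (Set.Iio 0) := by
  have h0 : Integrable ((Set.Iio (0 : ℝ)).indicator fun _ => (1 : ℝ)) μ :=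
    (integrable_const _).indicator measurableSet_Iio
  have h1 : Integrable ((Set.Iio (-A)).indicator fun _ => Real.exp (u * A) - 1) μ :=
    (integrable_const _).indicator measurableSet_Iio
  have key := integral_mono (h0.add h1) hI fun x => ?_
  · simp only [Pi.add_apply] at key
    rw [integral_add h0 h1, integral_indicator_const _ measurableSet_Iio,
      integral_indicator_const _ measurableSet_Iio] at key
    simp only [smul_eq_mul] at key
    linarith
  · simp only [Pi.add_apply, Set.indicator_apply, Set.mem_Iio]
    split_ifs with hx hxA hxA
    · have : Real.exp (u * A) ≤ Real.exp (-u * x) := Real.exp_le_exp.2 (by nlinarith)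
      linarith
    · have : 1 ≤ Real.exp (-u * x) := Real.one_le_exp (by nlinarith)
      linarith
    · linarith
    · simpa using (Real.exp_pos (-u * x)).le

lemma integral_exp_mul_sub_one {A : ℝ} (hA : 0 < A) (s : ℝ) :
    ∫ u in (0 : ℝ)..s, (Real.exp (u * A) - 1) = (Real.exp (s * A) - s * A - 1) / A := by
  have hd : ∀ u ∈ Set.uIcc 0 s,
      HasDerivAt (fun u : ℝ => Real.exp (u * A) / A - u) (Real.exp (u * A) - 1) u := by
    intro u _
    have h := ((((hasDerivAt_id u).mul_const A).exp).div_const A).sub (hasDerivAt_id u)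
    exact h.congr_deriv (by simp [hA.ne'])
  rw [intervalIntegral.integral_eq_sub_of_hasDerivAt hd
    (Continuous.intervalIntegrable (by fun_prop) _ _)]
  simp
  field_simp

/-- Theorem 3 of the paper, second inequality: one-sided estimate for the left tail. -/
theorem left_tail_estimate
    (μ : Measure ℝ) [IsProbabilityMeasure μ]
    (b : ℝ≥0∞) (hb : 0 < b)
    (hint : ∀ u : ℝ, 0 < u → ENNReal.ofReal u < b →
      Integrable (fun x : ℝ => Real.exp (-u * x)) μ)
    (N : ℝ → ℝ) (hN : ∀ u : ℝ, N u = ∫ x, Real.exp (-u * x) ∂μ)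
    (A : ℝ) (hA : 0 < A) (s : ℝ) (hs : 0 < s) (hsb : ENNReal.ofReal s < b) :
    (μ {x : ℝ | x < -A}).toReal ≤
      A / (Real.exp (s * A) - s * A - 1) *
        ∫ u in (0 : ℝ)..s, (N u - (μ (Set.Iio (0 : ℝ))).toReal) := by
  obtain rfl : N = fun u => ∫ x, Real.exp (-u * x) ∂μ := funext hN
  have hI := hint s hs hsb
  have hD : 0 < Real.exp (s * A) - s * A - 1 := by
    linarith [Real.add_one_lt_exp (mul_pos hs hA).ne']
  have h := intervalIntegral.integral_mono_on (μ := volume) hs.le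
    (f := fun u => (Real.exp (u * A) - 1) * μ.real (Set.Iio (-A)))
    (g := fun u => (∫ x, Real.exp (-u * x) ∂μ) - μ.real (Set.Iio 0))
    (Continuous.intervalIntegrable (by fun_prop) _ _)
    ((intervalIntegrable_laplace hs hI).sub intervalIntegrable_const)
    (fun u hu => exp_sub_one_mul_tail_le (integrable_exp_neg_mul_of_le hI hu.1 hu.2) hu.1 hA)
  rw [intervalIntegral.integral_mul_const, integral_exp_mul_sub_one hA] at h
  change μ.real (Set.Iio (-A)) ≤ A / (Real.exp (s * A) - s * A - 1) *
    ∫ u in (0 : ℝ)..s, ((∫ x, Real.exp (-u * x) ∂μ) - μ.real (Set.Iio 0))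
  calc μ.real (Set.Iio (-A))
      = A / (Real.exp (s * A) - s * A - 1) *
          ((Real.exp (s * A) - s * A - 1) / A * μ.real (Set.Iio (-A))) := by
        have := hD.ne'
        rw [← mul_assoc, div_mul_div_cancel₀ this, div_self hA.ne', one_mul]
    _ ≤ _ := mul_le_mul_of_nonneg_left h (div_pos hA hD).le
end
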